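/- (Lemma: accuracy of V_{(1)}.) In the SARRS setting, suppose ‖U_{(1)}U_{(1)}' − UU'‖_F < c_1' for a sufficiently small positive constant c_1', where U ∈ O(n,r) is the left singular vector matrix of XA, A ∈ Θ(s,r,d,γ), and U_{(1)} ∈ O(n,r) is independent of Y_{(2)} = XA + Z_{(2)} with Z_{(2)} having i.i.d. N(0,4σ²) entries. Let V ∈ O(m,r) be the right singular vector matrix of XA and V_{(1)} ∈ O(m,r) the matrix of top-r right singular vectors of U_{(1)}U_{(1)}'Y_{(2)}. Assume κ_-(s_*) d ≤ σ_r(XA) and σ_1(XA) ≤ κ_+(s_*) γ d with K^{-1} ≤ κ_-(s_*) ≤ κ_+(s_*) ≤ K for an absolute constant K > 1. Then there exists a constant C depending only on κ_±(s_*), γ and c_1' such that, with probability at least 1 − 1/p, ‖V_{(1)}V_{(1)}' − VV'‖_F ≤ C σ (√(mr) + √(2 log p)) / d. -/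

import Mathlib

open MeasureTheory ProbabilityTheory Matrix Set
open scoped ENNReal NNReal

noncomputable section

/-- Euclidean (ℓ₂) norm of a finitely indexed real vector. -/
def l2norm {I : Type*} [Fintype I] (v : I → ℝ) : ℝ := Real.sqrt (∑ i, v i ^ 2)

/-- Frobenius norm of a real matrix. -/
def frobNorm {I J : Type*} [Fintype I] [Fintype J] (M : Matrix I J ℝ) : ℝ :=
  Real.sqrt (∑ i, ∑ j, M i j ^ 2)

/-- ℓ₂/ℓ₁ norm: the sum of the ℓ₂ norms of the rows. -/
def norm21 {I J : Type*} [Fintype I] [Fintype J] (M : Matrix I J ℝ) : ℝ :=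
  ∑ i, l2norm (M i)

open Classical in
/-- Row support: indices of nonzero rows. -/
def rowSupport {I J : Type*} [Fintype I] [Fintype J] (M : Matrix I J ℝ) : Finset I :=
  Finset.univ.filter (fun i => M i ≠ 0)

/-- The j-th largest singular value (j ≥ 1), via the Courant–Fischer max–min
characterization: `σ_j(M) = max_{dim V = j} min_{v ∈ V, ‖v‖=1} ‖Mv‖`. -/
def singularValue {I J : Type*} [Fintype I] [Fintype J] (M : Matrix I J ℝ) (j : ℕ) : ℝ :=
  sSup { t | ∃ V : Submodule ℝ (J → ℝ), Module.finrank ℝ V = j ∧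
    t = sInf { u | ∃ v ∈ V, l2norm v = 1 ∧ u = l2norm (M.mulVec v) } }

/-- Operator norm (largest singular value). -/
def opNorm {I J : Type*} [Fintype I] [Fintype J] (M : Matrix I J ℝ) : ℝ :=
  sSup { t | ∃ v : J → ℝ, l2norm v = 1 ∧ t = l2norm (M.mulVec v) }

/-- Schatten-q norm. -/
def schattenNorm {I J : Type*} [Fintype I] [Fintype J] (M : Matrix I J ℝ) (q : ℝ) : ℝ :=
  (∑ i ∈ Finset.Icc 1 (min (Fintype.card I) (Fintype.card J)), singularValue M i ^ q) ^ (1 / q)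

/-- Squared lower k-sparse Riesz constant `κ₋²(k)`:
the minimum over column subsets B with |B| = k of the smallest eigenvalue of X_B' X_B. -/
def kappaMinusSq {n p : ℕ} (X : Matrix (Fin n) (Fin p) ℝ) (k : ℕ) : ℝ :=
  sInf { t | ∃ B : Finset (Fin p), B.card = k ∧ ∃ v : Fin p → ℝ,
    (∀ i, i ∉ B → v i = 0) ∧ l2norm v = 1 ∧ t = l2norm (X.mulVec v) ^ 2 }

/-- Squared upper k-sparse Riesz constant `κ₊²(k)`. -/
def kappaPlusSq {n p : ℕ} (X : Matrix (Fin n) (Fin p) ℝ) (k : ℕ) : ℝ :=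
  sSup { t | ∃ B : Finset (Fin p), B.card = k ∧ ∃ v : Fin p → ℝ,
    (∀ i, i ∉ B → v i = 0) ∧ l2norm v = 1 ∧ t = l2norm (X.mulVec v) ^ 2 }

def kappaMinus {n p : ℕ} (X : Matrix (Fin n) (Fin p) ℝ) (k : ℕ) : ℝ :=
  Real.sqrt (kappaMinusSq X k)

def kappaPlus {n p : ℕ} (X : Matrix (Fin n) (Fin p) ℝ) (k : ℕ) : ℝ :=
  Real.sqrt (kappaPlusSq X k)

/-- Membership in the parameter space Θ(s, r, d, γ): rank r, all nonzero singular values in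
(d, γd], and at most s nonzero rows. (Singular values are automatically nonincreasing.) -/
def memTheta {p m : ℕ} (A : Matrix (Fin p) (Fin m) ℝ) (s r : ℕ) (d γ : ℝ) : Prop :=
  A.rank = r ∧ 0 < d ∧ singularValue A 1 ≤ γ * d ∧ d < singularValue A r ∧
    (rowSupport A).card ≤ s

/-- `V` is a matrix of top-r right singular vectors of `M`: the columns of `V` are orthonormal
eigenvectors of `MᵀM`, the j-th column with eigenvalue `σ_j(M)²`. -/
def IsRightSingularVectors {I J : Type*} [Fintype I] [Fintype J] {r : ℕ}
    (M : Matrix I J ℝ) (V : Matrix J (Fin r) ℝ) : Prop :=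
  Vᵀ * V = 1 ∧ ∀ j : Fin r,
    (Mᵀ * M).mulVec (fun i => V i j) = (singularValue M (j.1 + 1)) ^ 2 • (fun i => V i j)

/-- `U` is a matrix of top-r left singular vectors of `M`. -/
def IsLeftSingularVectors {I J : Type*} [Fintype I] [Fintype J] {r : ℕ}
    (M : Matrix I J ℝ) (U : Matrix I (Fin r) ℝ) : Prop :=
  IsRightSingularVectors Mᵀ U

instance matrixMeasurableSpace {n m : ℕ} : MeasurableSpace (Matrix (Fin n) (Fin m) ℝ) :=
  (inferInstance : MeasurableSpace (Fin n → Fin m → ℝ))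

/-- Law of an n×m random matrix with i.i.d. N(0, v) entries. -/
def gaussianMatrix (n m : ℕ) (v : ℝ≥0) : Measure (Matrix (Fin n) (Fin m) ℝ) :=
  Measure.pi fun _ : Fin n => Measure.pi fun _ : Fin m => gaussianReal 0 v

open Classical in
/-- Kullback–Leibler divergence D(P‖Q). -/
def klDivM {Ω : Type*} [MeasurableSpace Ω] (P Q : Measure Ω) : ℝ≥0∞ :=
  if P ≪ Q ∧ Integrable (fun x => Real.log (P.rnDeriv Q x).toReal) P
  then ENNReal.ofReal (∫ x, Real.log (P.rnDeriv Q x).toReal ∂P)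
  else ∞

/-- ε-packing number of T with respect to the distance ρ: the maximal cardinality of a subset
of T whose pairwise ρ-distances are all at least ε. -/
def packingNumber {α : Type*} (T : Set α) (ρ : α → α → ℝ) (ε : ℝ) : ℕ :=
  sSup { k | ∃ S : Finset α, ↑S ⊆ T ∧ (∀ x ∈ S, ∀ y ∈ S, x ≠ y → ε ≤ ρ x y) ∧ S.card = k }

/-- Moore–Penrose pseudoinverse (characterized by the four Penrose equations). -/
def IsMoorePenrose {k : ℕ} (M Mi : Matrix (Fin k) (Fin k) ℝ) : Prop :=
  M * Mi * M = M ∧ Mi * M * Mi = Mi ∧ (M * Mi)ᵀ = M * Mi ∧ (Mi * M)ᵀ = Mi * M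


section gaussian_part

lemma lintegral_pi_prod {ι : Type*} [Fintype ι] {E : ι → Type*} [∀ i, MeasurableSpace (E i)]
    (μ : ∀ i, Measure (E i)) [∀ i, IsProbabilityMeasure (μ i)] (f : ∀ i, E i → ℝ≥0∞)
    (hf : ∀ i, Measurable (f i)) :
    ∫⁻ x, ∏ i, f i (x i) ∂(Measure.pi μ) = ∏ i, ∫⁻ y, f i y ∂(μ i) := by
  have h := lintegral_prod_eq_prod_lintegral_of_indepFun (μ := Measure.pi μ) Finset.univ
    (fun i x => f i (x i)) (iIndepFun_pi (fun i => (hf i).aemeasurable))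
    (fun i => (hf i).comp (measurable_pi_apply i))
  rw [h]
  refine Finset.prod_congr rfl fun i _ => ?_
  exact (measurePreserving_eval μ i).lintegral_comp (hf i)

lemma lintegral_exp_gaussian (v : ℝ≥0) (t : ℝ) :
    ∫⁻ x, ENNReal.ofReal (Real.exp (t * x)) ∂(gaussianReal 0 v)
      = ENNReal.ofReal (Real.exp (v * t ^ 2 / 2)) := by
  rw [← ofReal_integral_eq_lintegral_ofReal (integrable_exp_mul_gaussianReal t)
    (Filter.Eventually.of_forall fun x => (Real.exp_pos _).le)]
  have := mgf_gaussianReal (p := gaussianReal 0 v) (X := id) (μ := 0) (v := v) (by simp) t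
  simp only [mgf, id] at this
  rw [this]; simp

lemma lintegral_exp_sq_gaussian :
    ∫⁻ x, ENNReal.ofReal (Real.exp (x ^ 2 / 4)) ∂(gaussianReal 0 1)
      ≤ ENNReal.ofReal (Real.exp (1 / 2)) := by
  rw [gaussianReal_of_var_ne_zero 0 one_ne_zero,
    lintegral_withDensity_eq_lintegral_mul _ (measurable_gaussianPDF 0 1) (by fun_prop)]
  have h : ∀ x : ℝ, (gaussianPDF 0 1 * fun x => ENNReal.ofReal (Real.exp (x ^ 2 / 4))) x
      = ENNReal.ofReal (√2) * gaussianPDF 0 2 x := by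
    intro x
    simp only [Pi.mul_apply, gaussianPDF]
    rw [← ENNReal.ofReal_mul (gaussianPDFReal_nonneg _ _ _), ← ENNReal.ofReal_mul (by positivity)]
    congr 1
    simp only [gaussianPDFReal]
    rw [mul_assoc, ← Real.exp_add]
    have e1 : √(2 * Real.pi * ((2 : ℝ≥0) : ℝ)) = √2 * √(2 * Real.pi) := by
      rw [← Real.sqrt_mul (by norm_num)]; congr 1; push_cast; ring
    rw [e1]
    have : √2 ≠ 0 := by positivity
    have h2 : √(2 * Real.pi) ≠ 0 := by positivity
    push_cast
    rw [mul_one, mul_inv, ← mul_assoc, ← mul_assoc, mul_inv_cancel₀ this, one_mul]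
    congr 2; ring
  simp_rw [h]
  rw [lintegral_const_mul _ (measurable_gaussianPDF 0 2), lintegral_gaussianPDF_eq_one 0 two_ne_zero,
    mul_one]
  apply ENNReal.ofReal_le_ofReal
  have : Real.exp (1/2) = √(Real.exp 1) := by
    rw [Real.exp_half]
  rw [this]
  apply Real.sqrt_le_sqrt
  have := Real.add_one_le_exp (1:ℝ)
  linarith

instance gaussianMatrix_prob (n m : ℕ) (v : ℝ≥0) : IsProbabilityMeasure (gaussianMatrix n m v) := by
  exact inferInstanceAs (IsProbabilityMeasure
    (Measure.pi fun _ : Fin n => Measure.pi fun _ : Fin m => gaussianReal 0 v))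

lemma lintegral_gaussianMatrix_prod (n m : ℕ) (v : ℝ≥0) (f : Fin n → Fin m → ℝ → ℝ≥0∞)
    (hf : ∀ i j, Measurable (f i j)) :
    ∫⁻ z, ∏ i, ∏ j, f i j (z i j) ∂(gaussianMatrix n m v)
      = ∏ i, ∏ j, ∫⁻ y, f i j y ∂(gaussianReal 0 v) := by
  unfold gaussianMatrix
  have := lintegral_pi_prod (fun _ : Fin n => Measure.pi fun _ : Fin m => gaussianReal 0 v)
    (fun i x => ∏ j, f i j (x j))
    (fun i => Finset.measurable_prod _ fun j _ => (hf i j).comp (measurable_pi_apply j))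
  refine this.trans ?_
  refine Finset.prod_congr rfl fun i _ => ?_
  exact lintegral_pi_prod _ _ (hf i)

lemma lintegral_gaussianMatrix_exp (n m : ℕ) (v : ℝ≥0) (f : Fin n → Fin m → ℝ → ℝ)
    (hf : ∀ i j, Measurable (f i j)) :
    ∫⁻ z, ENNReal.ofReal (Real.exp (∑ i, ∑ j, f i j (z i j))) ∂(gaussianMatrix n m v)
      = ∏ i, ∏ j, ∫⁻ y, ENNReal.ofReal (Real.exp (f i j y)) ∂(gaussianReal 0 v) := by
  rw [← lintegral_gaussianMatrix_prod n m v _ (fun i j => by have := hf i j; fun_prop)]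
  congr 1; ext z
  simp_rw [Real.exp_sum]
  rw [ENNReal.ofReal_prod_of_nonneg (fun i _ => Finset.prod_nonneg fun j _ => (Real.exp_pos _).le)]
  refine Finset.prod_congr rfl fun i _ => ?_
  rw [ENNReal.ofReal_prod_of_nonneg (fun j _ => (Real.exp_pos _).le)]

lemma lintegral_gaussianMatrix_exp_lin (n m : ℕ) (v : ℝ≥0) (T : Matrix (Fin n) (Fin m) ℝ) :
    ∫⁻ z, ENNReal.ofReal (Real.exp (∑ i, ∑ j, T i j * z i j)) ∂(gaussianMatrix n m v)
      = ENNReal.ofReal (Real.exp (v / 2 * ∑ i, ∑ j, T i j ^ 2)) := by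
  rw [lintegral_gaussianMatrix_exp n m v (fun i j y => T i j * y) (fun i j => by fun_prop)]
  simp_rw [lintegral_exp_gaussian, Finset.mul_sum, Real.exp_sum]
  rw [ENNReal.ofReal_prod_of_nonneg (fun i _ => Finset.prod_nonneg fun j _ => (Real.exp_pos _).le)]
  refine Finset.prod_congr rfl fun i _ => ?_
  rw [ENNReal.ofReal_prod_of_nonneg (fun j _ => (Real.exp_pos _).le)]
  refine Finset.prod_congr rfl fun j _ => ?_
  congr 2; ring

def fsq {I J : Type*} [Fintype I] [Fintype J] (M : Matrix I J ℝ) : ℝ := ∑ i, ∑ j, M i j ^ 2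

lemma fsq_eq_trace {I J : Type*} [Fintype I] [Fintype J] (M : Matrix I J ℝ) :
    fsq M = (Mᵀ * M).trace := by
  simp only [fsq, Matrix.trace, Matrix.diag, Matrix.mul_apply, Matrix.transpose_apply]
  rw [Finset.sum_comm]
  simp_rw [sq]

lemma inner_eq_trace {I J : Type*} [Fintype I] [Fintype J] (M N : Matrix I J ℝ) :
    ∑ i, ∑ j, M i j * N i j = (Mᵀ * N).trace := by
  simp only [Matrix.trace, Matrix.diag, Matrix.mul_apply, Matrix.transpose_apply]
  rw [Finset.sum_comm]

lemma fsq_isometry {I J K : Type*} [Fintype I] [Fintype J] [Fintype K] [DecidableEq J]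
    (U : Matrix I J ℝ) (hU : Uᵀ * U = 1) (W : Matrix J K ℝ) : fsq (U * W) = fsq W := by
  rw [fsq_eq_trace, fsq_eq_trace, Matrix.transpose_mul, Matrix.mul_assoc, ← Matrix.mul_assoc Uᵀ, hU,
    Matrix.one_mul]

lemma measurable_entry {n m : ℕ} (i : Fin n) (j : Fin m) :
    Measurable (fun z : Matrix (Fin n) (Fin m) ℝ => z i j) :=
  (measurable_pi_apply j).comp (measurable_pi_apply (X := fun _ : Fin n => (Fin m → ℝ)) i)

lemma measurable_fsq_mul {n m r : ℕ} (U : Matrix (Fin n) (Fin r) ℝ) :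
    Measurable (fun z : Matrix (Fin n) (Fin m) ℝ => fsq (Uᵀ * z)) := by
  unfold fsq
  simp only [Matrix.mul_apply]
  refine Finset.measurable_sum _ fun i _ => Finset.measurable_sum _ fun j _ => ?_
  refine Measurable.pow_const (Finset.measurable_sum _ fun k _ => ?_) 2
  exact (measurable_entry k j).const_mul _

lemma chi_mgf {n m r : ℕ} (v : ℝ≥0) (hv : 0 < v) (U : Matrix (Fin n) (Fin r) ℝ) (hU : Uᵀ * U = 1) :
    ∫⁻ z, ENNReal.ofReal (Real.exp (fsq (Uᵀ * z) / (4 * v))) ∂(gaussianMatrix n m v)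
      ≤ ENNReal.ofReal (Real.exp (m * r / 2)) := by
  have hv' : (0 : ℝ) < v := hv
  set t : ℝ := √(1 / (2 * v)) with ht
  have ht2 : t ^ 2 = 1 / (2 * v) := Real.sq_sqrt (by positivity)
  have key : ∀ (z : Matrix (Fin n) (Fin m) ℝ) (g : Matrix (Fin r) (Fin m) ℝ),
      ∑ i, ∑ j, (t • (Uᵀ * z)) i j * g i j = ∑ i, ∑ j, (t • (U * g)) i j * z i j := by
    intro z g
    rw [inner_eq_trace, inner_eq_trace]
    rw [← Matrix.trace_transpose (_ * z)]
    simp [Matrix.transpose_mul, Matrix.mul_assoc]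
  have step1 : ∀ z : Matrix (Fin n) (Fin m) ℝ, ENNReal.ofReal (Real.exp (fsq (Uᵀ * z) / (4 * v)))
      = ∫⁻ g, ENNReal.ofReal (Real.exp (∑ i, ∑ j, (t • (U * g)) i j * z i j))
        ∂(gaussianMatrix r m 1) := by
    intro z
    simp_rw [← key z]
    rw [lintegral_gaussianMatrix_exp_lin]
    congr 2
    simp only [Matrix.smul_apply, smul_eq_mul, mul_pow, ← Finset.mul_sum, ht2]
    rw [fsq]; push_cast; field_simp; norm_num
  simp_rw [step1]
  rw [lintegral_lintegral_swap]
  · simp_rw [lintegral_gaussianMatrix_exp_lin]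
    have step2 : ∀ g : Matrix (Fin r) (Fin m) ℝ,
        (v : ℝ) / 2 * ∑ i, ∑ j, (t • (U * g)) i j ^ 2 = ∑ i, ∑ j, g i j ^ 2 / 4 := by
      intro g
      have h1 := fsq_isometry U hU g
      simp only [fsq] at h1
      simp only [Matrix.smul_apply, smul_eq_mul, mul_pow, ← Finset.mul_sum, ht2, h1,
        ← Finset.sum_div]
      field_simp; ring
    simp_rw [step2]
    rw [lintegral_gaussianMatrix_exp r m 1 (fun _ _ y => y ^ 2 / 4) (fun i j => by fun_prop)]
    simp only [Finset.prod_const, Finset.card_univ, Fintype.card_fin]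
    calc _ ≤ ((ENNReal.ofReal (Real.exp (1 / 2))) ^ m) ^ r := by
            gcongr; exact lintegral_exp_sq_gaussian
      _ = _ := by
            rw [← pow_mul, ← ENNReal.ofReal_pow (Real.exp_pos _).le, ← Real.exp_nat_mul]
            congr 2; push_cast; ring
  · apply Measurable.aemeasurable
    apply ENNReal.measurable_ofReal.comp
    apply Real.measurable_exp.comp
    refine Finset.measurable_sum _ fun i _ => Finset.measurable_sum _ fun j _ => ?_
    refine Measurable.mul ?_ ((measurable_entry i j).comp measurable_fst)
    simp only [Matrix.smul_apply, Matrix.mul_apply, smul_eq_mul]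
    refine Measurable.const_mul (Finset.measurable_sum _ fun k _ => ?_) _
    exact ((measurable_entry k j).comp measurable_snd).const_mul _

lemma chi_tail {n m r p : ℕ} (hp : 1 ≤ p) (v : ℝ≥0) (hv : 0 < v) (U : Matrix (Fin n) (Fin r) ℝ)
    (hU : Uᵀ * U = 1) :
    ENNReal.ofReal (1 - 1 / (p : ℝ)) ≤ gaussianMatrix n m v
      {z | fsq (Uᵀ * z) ≤ v * (2 * (m * r) + 4 * Real.log p)} := by
  have hv' : (0 : ℝ) < v := hv
  have hp' : (0 : ℝ) < p := by exact_mod_cast hp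
  set S := {z : Matrix (Fin n) (Fin m) ℝ | fsq (Uᵀ * z) ≤ v * (2 * (m * r) + 4 * Real.log p)}
    with hS
  have hSm : MeasurableSet S := measurableSet_le (measurable_fsq_mul U) measurable_const
  have hc : gaussianMatrix n m v Sᶜ ≤ ENNReal.ofReal (1 / p) := by
    set E := Real.exp (m * r / 2 + Real.log p) with hE
    have hEpos : 0 < E := Real.exp_pos _
    have hsub : Sᶜ ⊆ {z | ENNReal.ofReal E ≤ ENNReal.ofReal (Real.exp (fsq (Uᵀ * z) / (4 * v)))} := by
      intro z hz
      simp only [hS, Set.mem_compl_iff, Set.mem_ofPred_eq, not_le] at hz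
      apply ENNReal.ofReal_le_ofReal
      apply Real.exp_le_exp.2
      rw [le_div_iff₀ (by positivity)]
      linarith
    refine (measure_mono hsub).trans ?_
    have mk := mul_meas_ge_le_lintegral (μ := gaussianMatrix n m v)
      (f := fun z => ENNReal.ofReal (Real.exp (fsq (Uᵀ * z) / (4 * v))))
      (by have := measurable_fsq_mul (m := m) U; fun_prop) (ENNReal.ofReal E)
    have mk2 := mk.trans (chi_mgf v hv U hU)
    rw [mul_comm, ← ENNReal.le_div_iff_mul_le (by left; simpa using hEpos) (by left; simp)] at mk2
    refine mk2.trans ?_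
    rw [← ENNReal.ofReal_div_of_pos hEpos]
    apply ENNReal.ofReal_le_ofReal
    rw [hE, Real.exp_add, Real.exp_log hp']
    field_simp; exact le_rfl
  have h1 := prob_add_prob_compl (μ := gaussianMatrix n m v) hSm
  rw [ENNReal.ofReal_sub _ (by positivity), ENNReal.ofReal_one, ← h1]
  exact tsub_le_iff_right.2 (by gcongr)

end gaussian_part

section linear_part

variable {I J : Type*} [Fintype I] [Fintype J]

lemma l2norm_nonneg (v : I → ℝ) : 0 ≤ l2norm v := Real.sqrt_nonneg _

lemma l2norm_sq (v : I → ℝ) : l2norm v ^ 2 = ∑ i, v i ^ 2 :=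
  Real.sq_sqrt (Finset.sum_nonneg fun i _ => sq_nonneg _)

lemma l2norm_smul (c : ℝ) (v : I → ℝ) : l2norm (c • v) = |c| * l2norm v := by
  unfold l2norm
  simp only [Pi.smul_apply, smul_eq_mul, mul_pow, ← Finset.mul_sum]
  rw [Real.sqrt_mul (sq_nonneg c), Real.sqrt_sq_eq_abs]

lemma norm_le_l2norm (v : I → ℝ) : ‖v‖ ≤ l2norm v := by
  rw [pi_norm_le_iff_of_nonneg (l2norm_nonneg v)]
  intro i
  rw [Real.norm_eq_abs]
  apply Real.abs_le_sqrt
  exact Finset.single_le_sum (f := fun i => v i ^ 2) (fun j _ => sq_nonneg _) (Finset.mem_univ i)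

lemma l2norm_le_norm (v : I → ℝ) : l2norm v ≤ √(Fintype.card I) * ‖v‖ := by
  apply Real.sqrt_le_iff.2
  refine ⟨by positivity, ?_⟩
  rw [mul_pow, Real.sq_sqrt (by positivity)]
  calc ∑ i, v i ^ 2 ≤ ∑ _i : I, ‖v‖ ^ 2 := by
        refine Finset.sum_le_sum fun i _ => ?_
        have := norm_le_pi_norm v i
        rw [Real.norm_eq_abs] at this
        rw [← sq_abs]; gcongr
    _ = _ := by simp

lemma l2norm_pos {v : I → ℝ} (h : v ≠ 0) : 0 < l2norm v :=
  (norm_pos_iff.2 h).trans_le (norm_le_l2norm v)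

lemma l2norm_mulVec_le (M : Matrix I J ℝ) (v : J → ℝ) :
    l2norm (M.mulVec v) ≤ frobNorm M * l2norm v := by
  apply Real.sqrt_le_iff.2
  refine ⟨mul_nonneg (Real.sqrt_nonneg _) (l2norm_nonneg _), ?_⟩
  rw [mul_pow, l2norm_sq, frobNorm, Real.sq_sqrt (by positivity), Finset.sum_mul]
  refine Finset.sum_le_sum fun i _ => ?_
  exact Finset.sum_mul_sq_le_sq_mul_sq _ _ _

/-- the set whose infimum appears in the definition of the singular values -/
def infSet (M : Matrix I J ℝ) (W : Submodule ℝ (J → ℝ)) : Set ℝ :=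
  { u | ∃ v ∈ W, l2norm v = 1 ∧ u = l2norm (M.mulVec v) }

lemma infSet_nonempty (M : Matrix I J ℝ) (W : Submodule ℝ (J → ℝ)) (h : 1 ≤ Module.finrank ℝ W) :
    (infSet M W).Nonempty := by
  have : Nontrivial W := Module.nontrivial_of_finrank_pos (R := ℝ) h
  obtain ⟨w, hw⟩ := exists_ne (0 : W)
  have hw' : (w : J → ℝ) ≠ 0 := by simpa using hw
  have hp := l2norm_pos hw'
  refine ⟨_, (l2norm (w : J → ℝ))⁻¹ • (w : J → ℝ), W.smul_mem _ w.2, ?_, rfl⟩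
  rw [l2norm_smul, abs_of_pos (inv_pos.2 hp), inv_mul_cancel₀ hp.ne']

lemma infSet_bddBelow (M : Matrix I J ℝ) (W : Submodule ℝ (J → ℝ)) : BddBelow (infSet M W) := by
  refine ⟨0, ?_⟩
  rintro u ⟨v, -, -, rfl⟩
  exact l2norm_nonneg _

def supSet (M : Matrix I J ℝ) (j : ℕ) : Set ℝ :=
  { t | ∃ V : Submodule ℝ (J → ℝ), Module.finrank ℝ V = j ∧ t = sInf (infSet M V) }

lemma singularValue_eq (M : Matrix I J ℝ) (j : ℕ) : singularValue M j = sSup (supSet M j) := rfl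

lemma supSet_bddAbove (M : Matrix I J ℝ) (j : ℕ) : BddAbove (supSet M j) := by
  refine ⟨frobNorm M, ?_⟩
  rintro t ⟨W, -, rfl⟩
  rcases (infSet M W).eq_empty_or_nonempty with h | ⟨u, hu⟩
  · rw [h, Real.sInf_empty]; exact Real.sqrt_nonneg _
  · refine (csInf_le (infSet_bddBelow M W) hu).trans ?_
    obtain ⟨v, -, hv, rfl⟩ := hu
    simpa [hv] using l2norm_mulVec_le M v

lemma exists_sub_finrank (W : Submodule ℝ (J → ℝ)) {j : ℕ} (hj : j ≤ Module.finrank ℝ W) :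
    ∃ W' ≤ W, Module.finrank ℝ W' = j := by
  let b := Module.finBasis ℝ W
  let f : Fin j → (J → ℝ) := fun i => (b (Fin.castLE hj i) : J → ℝ)
  have hf : LinearIndependent ℝ f := by
    have h1 := b.linearIndependent.comp (Fin.castLE hj) (Fin.castLE_injective hj)
    exact h1.map' W.subtype (Submodule.ker_subtype W)
  refine ⟨Submodule.span ℝ (Set.range f), ?_, ?_⟩
  · rw [Submodule.span_le]
    rintro _ ⟨i, rfl⟩
    exact (b (Fin.castLE hj i)).2
  · simpa using finrank_span_eq_card hf

lemma singularValue_anti (M : Matrix I J ℝ) {j k : ℕ} (hj : 1 ≤ j) (hjk : j ≤ k)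
    (hk : k ≤ Fintype.card J) : singularValue M k ≤ singularValue M j := by
  rw [singularValue_eq, singularValue_eq]
  apply csSup_le
  · obtain ⟨W, -, hW⟩ := exists_sub_finrank (⊤ : Submodule ℝ (J → ℝ)) (j := k) (by simpa using hk)
    exact ⟨_, W, hW, rfl⟩
  · rintro t ⟨W, hW, rfl⟩
    obtain ⟨W', hle, hW'⟩ := exists_sub_finrank W (hjk.trans hW.ge)
    refine le_trans ?_ (le_csSup (supSet_bddAbove M j) ⟨W', hW', rfl⟩)
    apply csInf_le_csInf (infSet_bddBelow M W) (infSet_nonempty M W' (hj.trans hW'.ge))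
    rintro u ⟨v, hv, h1, h2⟩
    exact ⟨v, hle hv, h1, h2⟩

lemma singularValue_pos (M : Matrix I J ℝ) {j : ℕ} (hj : 1 ≤ j) (hjr : j ≤ M.rank) :
    0 < singularValue M j := by
  classical
  obtain ⟨W, hW⟩ := Submodule.exists_isCompl (LinearMap.ker M.mulVecLin)
  have hfr : Module.finrank ℝ W = M.rank := by
    have h1 := Submodule.finrank_add_eq_of_isCompl hW
    have h2 := LinearMap.finrank_range_add_finrank_ker M.mulVecLin
    unfold Matrix.rank
    omega
  obtain ⟨W', hle, hW'⟩ := exists_sub_finrank W (hjr.trans hfr.ge)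
  have hker : LinearMap.ker (M.mulVecLin.domRestrict W') = ⊥ := by
    rw [LinearMap.ker_eq_bot']
    intro w hw
    have h0 : (w : J → ℝ) ∈ LinearMap.ker M.mulVecLin := by
      simpa [LinearMap.mem_ker] using hw
    have := hW.disjoint.le_bot (show (w : J → ℝ) ∈ _ from ⟨h0, hle w.2⟩)
    simpa using this
  obtain ⟨K, hK, hA⟩ := LinearMap.exists_antilipschitzWith _ hker
  have hlow : ∀ w ∈ W', l2norm w ≤ √(Fintype.card J) * K * l2norm (M.mulVec w) := by
    intro w hw
    have h1 := hA.le_mul_dist ⟨w, hw⟩ 0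
    simp only [dist_zero_right, map_zero] at h1
    have h2 : ‖w‖ ≤ K * ‖M.mulVec w‖ := by simpa using h1
    calc l2norm w ≤ √(Fintype.card J) * ‖w‖ := l2norm_le_norm w
      _ ≤ √(Fintype.card J) * (K * l2norm (M.mulVec w)) := by
          gcongr; exact h2.trans (by gcongr; exact norm_le_l2norm _)
      _ = _ := by ring
  set c : ℝ := √(Fintype.card J) * K with hc
  have hc0 : 0 ≤ c := by positivity
  have : 1 / (c + 1) ≤ sInf (infSet M W') := by
    apply le_csInf (infSet_nonempty M W' (hj.trans hW'.ge))
    rintro u ⟨v, hv, h1, rfl⟩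
    have h2 := hlow v hv
    rw [h1] at h2
    have h3 := l2norm_nonneg (M.mulVec v)
    rw [div_le_iff₀ (by positivity)]
    nlinarith
  calc (0 : ℝ) < 1 / (c + 1) := by positivity
    _ ≤ _ := this
    _ ≤ _ := le_csSup (supSet_bddAbove M j) ⟨W', hW', rfl⟩

lemma kill_compl [DecidableEq J] {r : ℕ} (N : Matrix I J ℝ) (V : Matrix J (Fin r) ℝ)
    (hV : IsRightSingularVectors N V) (hr : N.rank ≤ r) : N * (1 - V * Vᵀ) = 0 := by
  classical
  obtain ⟨hVV, heig⟩ := hV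
  let f : Fin N.rank → (J → ℝ) := fun j i => V i (Fin.castLE hr j)
  have hLI : LinearIndependent ℝ (fun j : Fin r => (fun i => V i j : J → ℝ)) := by
    rw [Fintype.linearIndependent_iff]
    intro g hg
    have h1 : V.mulVec g = 0 := by
      ext i
      have := congrFun hg i
      simpa [Matrix.mulVec, dotProduct, mul_comm] using this
    have h2 : Vᵀ.mulVec (V.mulVec g) = g := by
      rw [Matrix.mulVec_mulVec, hVV, Matrix.one_mulVec]
    rw [h1, Matrix.mulVec_zero] at h2
    intro i; rw [← h2]; rfl
  have hf : LinearIndependent ℝ f := hLI.comp _ (Fin.castLE_injective hr)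
  have hspan : Submodule.span ℝ (Set.range f) = LinearMap.range (Nᵀ * N).mulVecLin := by
    apply Submodule.eq_of_le_of_finrank_eq
    · rw [Submodule.span_le]
      rintro _ ⟨j, rfl⟩
      have hpos := singularValue_pos N (j := j.1 + 1) (by omega) (by omega)
      refine ⟨((singularValue N (j.1 + 1)) ^ 2)⁻¹ • f j, ?_⟩
      have h1 := heig (Fin.castLE hr j)
      simp only [Fin.val_castLE] at h1
      rw [map_smul, Matrix.mulVecLin_apply]
      change _ • (Nᵀ * N).mulVec (fun i => V i (Fin.castLE hr j)) = _
      rw [h1, smul_smul, inv_mul_cancel₀ (by positivity), one_smul]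
    · rw [finrank_span_eq_card hf, Fintype.card_fin]
      exact (Matrix.rank_transpose_mul_self N).symm
  have hkill : ∀ w : J → ℝ, Vᵀ.mulVec w = 0 → N.mulVec w = 0 := by
    intro w hw
    have hx : ∀ x ∈ Submodule.span ℝ (Set.range f), x ⬝ᵥ w = 0 := by
      intro x hx
      induction hx using Submodule.span_induction with
      | mem x h =>
        obtain ⟨j, rfl⟩ := h
        exact congrFun hw (Fin.castLE hr j)
      | zero => simp
      | add x y _ _ h1 h2 => rw [add_dotProduct, h1, h2, add_zero]
      | smul c x _ h => rw [smul_dotProduct, h, smul_zero]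
    have h1 := hx ((Nᵀ * N).mulVec w) (by rw [hspan]; exact ⟨w, rfl⟩)
    rw [← Matrix.mulVec_mulVec, Matrix.mulVec_transpose, ← Matrix.dotProduct_mulVec] at h1
    exact dotProduct_self_eq_zero.1 h1
  have hz : Vᵀ * (1 - V * Vᵀ) = 0 := by
    rw [Matrix.mul_sub, Matrix.mul_one, ← Matrix.mul_assoc, hVV, Matrix.one_mul, sub_self]
  ext i j
  have h1 : Vᵀ.mulVec (fun k => (1 - V * Vᵀ : Matrix J J ℝ) k j) = 0 := by
    ext k; exact congrFun (congrFun hz k) j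
  exact congrFun (hkill _ h1) i

lemma frobNorm_sq (M : Matrix I J ℝ) : frobNorm M ^ 2 = fsq M :=
  Real.sq_sqrt (Finset.sum_nonneg fun i _ => Finset.sum_nonneg fun j _ => sq_nonneg _)

lemma frobNorm_nonneg (M : Matrix I J ℝ) : 0 ≤ frobNorm M := Real.sqrt_nonneg _

lemma fsq_nonneg (M : Matrix I J ℝ) : 0 ≤ fsq M :=
  Finset.sum_nonneg fun i _ => Finset.sum_nonneg fun j _ => sq_nonneg _

lemma frobNorm_mul_le {K : Type*} [Fintype K] (M : Matrix I J ℝ) (N : Matrix J K ℝ) :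
    frobNorm (M * N) ≤ frobNorm M * frobNorm N := by
  apply Real.sqrt_le_iff.2
  refine ⟨mul_nonneg (frobNorm_nonneg _) (frobNorm_nonneg _), ?_⟩
  have h : fsq N = ∑ k, ∑ j, N j k ^ 2 := Finset.sum_comm
  rw [mul_pow, frobNorm_sq, frobNorm_sq, h, fsq, Finset.sum_mul_sum]
  refine Finset.sum_le_sum fun i _ => Finset.sum_le_sum fun k _ => ?_
  rw [Matrix.mul_apply]
  exact Finset.sum_mul_sq_le_sq_mul_sq _ _ _

lemma frobNorm_add_le (M N : Matrix I J ℝ) : frobNorm (M + N) ≤ frobNorm M + frobNorm N := by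
  have e : ∀ M : Matrix I J ℝ, frobNorm M
      = ‖WithLp.toLp 2 (fun q : I × J => M q.1 q.2)‖ := by
    intro M
    rw [EuclideanSpace.norm_eq, frobNorm, Fintype.sum_prod_type]
    simp
  rw [e, e, e]
  exact norm_add_le (WithLp.toLp 2 (fun q : I × J => M q.1 q.2))
    (WithLp.toLp 2 (fun q : I × J => N q.1 q.2))

lemma det_bound {n m r : ℕ} (hr : 1 ≤ r) (M Z : Matrix (Fin n) (Fin m) ℝ)
    (U U1 : Matrix (Fin n) (Fin r) ℝ) (V V1 : Matrix (Fin m) (Fin r) ℝ) (δ : ℝ) (hδ : 0 < δ)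
    (hrank : M.rank ≤ r) (hσ : δ ≤ singularValue M r)
    (hU : IsLeftSingularVectors M U) (hV : IsRightSingularVectors M V) (hU1 : U1ᵀ * U1 = 1)
    (hd : frobNorm (U1 * U1ᵀ - U * Uᵀ) < 1 / 2)
    (hV1 : IsRightSingularVectors (U1 * U1ᵀ * (M + Z)) V1) :
    δ ^ 2 * fsq (V1 * V1ᵀ - V * Vᵀ) ≤ 8 * fsq (U1ᵀ * Z) := by
  set Q : Matrix (Fin m) (Fin m) ℝ := 1 - V1 * V1ᵀ with hQ
  have hrV : r ≤ m := by
    have h1 : (Vᵀ * V).rank = r := by rw [hV.1, Matrix.rank_one, Fintype.card_fin]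
    have h2 := Matrix.rank_mul_le_right Vᵀ V
    have h3 := V.rank_le_card_height
    simp at h3; omega
  have kM : M * (1 - V * Vᵀ) = 0 := kill_compl M V hV hrank
  have kU : Mᵀ * (1 - U * Uᵀ) = 0 := kill_compl Mᵀ U hU (by rwa [Matrix.rank_transpose])
  have kU' : U * Uᵀ * M = M := by
    have := congrArg Matrix.transpose kU
    simp only [Matrix.transpose_mul, Matrix.transpose_sub, Matrix.transpose_transpose,
      Matrix.transpose_one, Matrix.transpose_zero, Matrix.sub_mul, Matrix.one_mul] at this
    exact (sub_eq_zero.1 this).symm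
  have kN : U1 * U1ᵀ * (M + Z) * Q = 0 := by
    apply kill_compl _ _ hV1
    refine (Matrix.rank_mul_le_left _ _).trans ((Matrix.rank_mul_le_left _ _).trans ?_)
    simpa using U1.rank_le_card_width
  have hVV1 := hV1.1
  have hVV := hV.1
  have hQt : Qᵀ = Q := by simp [hQ]
  have hQ2 : Q * Q = Q := by
    have : V1 * V1ᵀ * (V1 * V1ᵀ) = V1 * V1ᵀ := by
      rw [Matrix.mul_assoc, ← Matrix.mul_assoc V1ᵀ, hVV1, Matrix.one_mul]
    rw [hQ, Matrix.mul_sub, Matrix.sub_mul, Matrix.sub_mul, Matrix.mul_one, Matrix.one_mul, this,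
      Matrix.mul_one, sub_self, sub_zero]
  -- step A
  have sA : fsq (V1 * V1ᵀ - V * Vᵀ) = 2 * fsq (Vᵀ * Q) := by
    have t1 : (V1 * V1ᵀ * (V1 * V1ᵀ)).trace = r := by
      rw [Matrix.mul_assoc, ← Matrix.mul_assoc V1ᵀ, hVV1, Matrix.one_mul, Matrix.trace_mul_comm, hVV1]
      simp
    have t2 : (V * Vᵀ * (V * Vᵀ)).trace = r := by
      rw [Matrix.mul_assoc, ← Matrix.mul_assoc Vᵀ, hVV, Matrix.one_mul, Matrix.trace_mul_comm, hVV]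
      simp
    have t3 : (V * Vᵀ * (V1 * V1ᵀ)).trace = (V1 * V1ᵀ * (V * Vᵀ)).trace := Matrix.trace_mul_comm _ _
    have t4 : (V * Vᵀ).trace = r := by rw [Matrix.trace_mul_comm, hVV]; simp
    have e1 : fsq (V1 * V1ᵀ - V * Vᵀ) = 2 * r - 2 * (V1 * V1ᵀ * (V * Vᵀ)).trace := by
      rw [fsq_eq_trace]
      simp only [Matrix.transpose_sub, Matrix.transpose_mul, Matrix.transpose_transpose,
        Matrix.sub_mul, Matrix.mul_sub, Matrix.trace_sub, t1, t2, t3]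
      ring
    have e2 : fsq (Vᵀ * Q) = r - (V1 * V1ᵀ * (V * Vᵀ)).trace := by
      rw [fsq_eq_trace, Matrix.transpose_mul, Matrix.transpose_transpose, hQt, Matrix.mul_assoc,
        Matrix.trace_mul_comm, Matrix.mul_assoc, Matrix.mul_assoc, hQ2, ← Matrix.mul_assoc, hQ,
        Matrix.mul_sub, Matrix.mul_one, Matrix.trace_sub, t3, t4]
    rw [e1, e2]; ring
  -- step B
  have sB : δ ^ 2 * fsq (Vᵀ * Q) ≤ fsq (M * Q) := by
    have hMV : M = M * V * Vᵀ := by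
      rw [Matrix.mul_sub, Matrix.mul_one] at kM
      rw [Matrix.mul_assoc]; exact sub_eq_zero.1 kM
    have hdiag : Vᵀ * (Mᵀ * M * V) = Matrix.diagonal fun j : Fin r => singularValue M (j.1 + 1) ^ 2 := by
      have h1 : Mᵀ * M * V = V * Matrix.diagonal fun j : Fin r => singularValue M (j.1 + 1) ^ 2 := by
        ext i j
        have := congrFun (hV.2 j) i
        rw [Matrix.mul_diagonal]
        simp only [Pi.smul_apply, smul_eq_mul] at this
        rw [mul_comm]
        exact this
      rw [h1, ← Matrix.mul_assoc, hVV, Matrix.one_mul]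
    have e1 : fsq (M * Q) = ∑ j : Fin r, singularValue M (j.1 + 1) ^ 2 * ∑ k, (Vᵀ * Q) j k ^ 2 := by
      have h1 : (M * Q)ᵀ * (M * Q)
          = (Vᵀ * Q)ᵀ * ((Vᵀ * (Mᵀ * M * V)) * (Vᵀ * Q)) := by
        conv_lhs => rw [hMV]
        simp only [Matrix.transpose_mul, Matrix.transpose_transpose, Matrix.mul_assoc]
      rw [fsq_eq_trace, h1, hdiag, ← inner_eq_trace]
      refine Finset.sum_congr rfl fun j _ => ?_
      rw [Finset.mul_sum]
      refine Finset.sum_congr rfl fun k _ => ?_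
      rw [Matrix.diagonal_mul]; ring
    rw [e1, fsq, Finset.mul_sum]
    refine Finset.sum_le_sum fun j _ => ?_
    have h2 : singularValue M r ≤ singularValue M (j.1 + 1) :=
      singularValue_anti M (by omega) (by omega) (by simpa using hrV)
    have h3 : δ ≤ singularValue M (j.1 + 1) := hσ.trans h2
    gcongr
  -- step C
  have sC : frobNorm (M * Q) ≤ 2 * frobNorm (U1 * U1ᵀ * M * Q) := by
    have h1 : M * Q = U1 * U1ᵀ * M * Q + (-(U1 * U1ᵀ - U * Uᵀ)) * (M * Q) := by
      have : U * Uᵀ * (M * Q) = M * Q := by rw [← Matrix.mul_assoc, kU']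
      rw [Matrix.neg_mul, Matrix.sub_mul, this, Matrix.mul_assoc _ M Q]
      abel
    have h2 := frobNorm_add_le (U1 * U1ᵀ * M * Q) ((-(U1 * U1ᵀ - U * Uᵀ)) * (M * Q))
    rw [← h1] at h2
    have h3 := frobNorm_mul_le (-(U1 * U1ᵀ - U * Uᵀ)) (M * Q)
    have h4 : frobNorm (-(U1 * U1ᵀ - U * Uᵀ)) = frobNorm (U1 * U1ᵀ - U * Uᵀ) := by
      simp only [frobNorm, Matrix.neg_apply, neg_sq]
    rw [h4] at h3
    have h5 := frobNorm_nonneg (M * Q)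
    nlinarith
  -- step D
  have sD : fsq (U1 * U1ᵀ * M * Q) ≤ fsq (U1ᵀ * Z) := by
    have h1 : U1 * U1ᵀ * M * Q = U1 * (-(U1ᵀ * Z * Q)) := by
      have : U1 * U1ᵀ * M * Q + U1 * U1ᵀ * Z * Q = 0 := by
        rw [← Matrix.add_mul, ← Matrix.mul_add]; exact kN
      rw [Matrix.mul_neg]
      rw [eq_neg_of_add_eq_zero_left this]
      simp only [Matrix.mul_assoc]
    rw [h1, fsq_isometry U1 hU1]
    generalize U1ᵀ * Z = W
    have h2 : fsq (-(W * Q)) = fsq W - fsq (W * V1) := by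
      have : fsq (-(W * Q)) = fsq (W * Q) := by simp only [fsq, Matrix.neg_apply, neg_sq]
      rw [this, fsq_eq_trace, fsq_eq_trace, fsq_eq_trace, Matrix.transpose_mul,
        Matrix.transpose_mul, hQt]
      have a1 : (Q * Wᵀ * (W * Q)).trace = (Wᵀ * W * Q).trace := by
        rw [Matrix.trace_mul_comm, Matrix.mul_assoc, ← Matrix.mul_assoc Q Q, hQ2,
          Matrix.trace_mul_comm, Matrix.mul_assoc, Matrix.trace_mul_comm]
      have a2 : (V1ᵀ * Wᵀ * (W * V1)).trace = (Wᵀ * W * (V1 * V1ᵀ)).trace := by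
        rw [Matrix.mul_assoc, Matrix.trace_mul_comm]
        simp only [Matrix.mul_assoc]
      rw [a1, a2, hQ, Matrix.mul_sub, Matrix.mul_one, Matrix.trace_sub]
    rw [h2]
    have := fsq_nonneg (W * V1)
    linarith
  have sC' : fsq (M * Q) ≤ 4 * fsq (U1 * U1ᵀ * M * Q) := by
    rw [← frobNorm_sq, ← frobNorm_sq]
    have := frobNorm_nonneg (M * Q)
    nlinarith
  rw [sA]
  linarith

end linear_part

/-- Accuracy of V_{(1)}. There is a sufficiently small absolute constant c₁' > 0
such that for all values a = κ₋(s_*), b = κ₊(s_*) and γ there is a constant C > 0 depending only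
on these (and c₁') such that: if ‖U_{(1)}U_{(1)}' − UU'‖_F < c₁', where U_{(1)} is deterministic
(hence independent of Y_{(2)} = XA + Z_{(2)}, Z_{(2)} with i.i.d. N(0,(2σ)²) entries), and
V_{(1)} collects the top-r right singular vectors of U_{(1)}U_{(1)}'Y_{(2)}, then with
probability at least 1 − 1/p, ‖V_{(1)}V_{(1)}' − VV'‖_F ≤ C σ (√(mr) + √(2 log p))/d. -/
theorem stmt8 :
    ∃ c1' : ℝ, 0 < c1' ∧
    ∀ a b γ : ℝ, 0 < a → 1 ≤ γ →
    ∃ C : ℝ, 0 < C ∧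
    ∀ (n m p s r sstar : ℕ) (d σ K : ℝ)
      (X : Matrix (Fin n) (Fin p) ℝ) (A : Matrix (Fin p) (Fin m) ℝ)
      (U U1 : Matrix (Fin n) (Fin r) ℝ) (V : Matrix (Fin m) (Fin r) ℝ)
      (V1 : Matrix (Fin n) (Fin m) ℝ → Matrix (Fin m) (Fin r) ℝ),
      1 ≤ r → r ≤ s →
      memTheta A s r d γ →
      0 < σ →
      1 < K → K⁻¹ ≤ kappaMinus X sstar → kappaMinus X sstar ≤ kappaPlus X sstar →
      kappaPlus X sstar ≤ K →
      kappaMinus X sstar = a → kappaPlus X sstar = b →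
      IsLeftSingularVectors (X * A) U →
      IsRightSingularVectors (X * A) V →
      U1ᵀ * U1 = 1 →
      frobNorm (U1 * U1ᵀ - U * Uᵀ) < c1' →
      kappaMinus X sstar * d ≤ singularValue (X * A) r →
      singularValue (X * A) 1 ≤ kappaPlus X sstar * γ * d →
      (∀ z2 : Matrix (Fin n) (Fin m) ℝ,
        IsRightSingularVectors (U1 * U1ᵀ * (X * A + z2)) (V1 z2)) →
      ENNReal.ofReal (1 - 1 / (p : ℝ)) ≤
        gaussianMatrix n m (Real.toNNReal ((2 * σ) ^ 2))
          {z | frobNorm (V1 z * (V1 z)ᵀ - V * Vᵀ) ≤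
            C * σ * (Real.sqrt ((m : ℝ) * r) + Real.sqrt (2 * Real.log p)) / d} := by
  refine ⟨1 / 2, by norm_num, ?_⟩
  intro a b γ ha hγ
  refine ⟨8 / a, by positivity, ?_⟩
  intro n m p s r sstar d σ K X A U U1 V V1 hr hrs hA hσ hK hKm hmp hpK hka hkb hU hV hU1 hc hlow
    hup hV1
  obtain ⟨hrank, hd, -, -, -⟩ := hA
  have hp : 1 ≤ p := by
    have := A.rank_le_card_height
    simp at this; omega
  have hv : 0 < Real.toNNReal ((2 * σ) ^ 2) := Real.toNNReal_pos.2 (by positivity)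
  refine (chi_tail (m := m) hp _ hv U1 hU1).trans (measure_mono ?_)
  intro z hz
  simp only [Set.mem_ofPred_eq] at hz ⊢
  rw [Real.coe_toNNReal _ (by positivity)] at hz
  rw [hka] at hlow
  have hb := det_bound hr (X * A) z U U1 V (V1 z) (a * d) (by positivity)
    ((Matrix.rank_mul_le_right _ _).trans hrank.le) hlow hU hV hU1 hc (hV1 z)
  have hlog : 0 ≤ Real.log p := Real.log_nonneg (by exact_mod_cast hp)
  set S := Real.sqrt ((m : ℝ) * r) + Real.sqrt (2 * Real.log p) with hS
  have hS0 : 0 ≤ S := by positivity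
  have hS2 : (m : ℝ) * r + 2 * Real.log p ≤ S ^ 2 := by
    have h1 := Real.sq_sqrt (show 0 ≤ (m : ℝ) * r by positivity)
    have h2 := Real.sq_sqrt (show 0 ≤ 2 * Real.log p by positivity)
    have h3 := Real.sqrt_nonneg ((m : ℝ) * r)
    have h4 := Real.sqrt_nonneg (2 * Real.log p)
    rw [hS, add_sq]
    nlinarith [mul_nonneg h3 h4]
  apply Real.sqrt_le_iff.2
  refine ⟨by positivity, ?_⟩
  change fsq _ ≤ _
  have e : (8 / a * σ * S / d) ^ 2 = 64 * σ ^ 2 * S ^ 2 / (a * d) ^ 2 := by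
    field_simp; ring
  rw [e, le_div_iff₀ (by positivity)]
  have : σ ^ 2 * (m * r + 2 * Real.log p) ≤ σ ^ 2 * S ^ 2 := by gcongr
  nlinarith

end
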